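/- arXiv:1907.13452 — 2 statements merged into one kernel-verified Lean document; each statement's English description precedes it below -/
import Mathlib

section
/- Let ε ≥ 0, N ∈ ℕ, and let P ∈ ℝ^{N×N} be a matrix with all entries nonnegative. Let x⁰ ∈ ℝ^N have all components nonnegative, and define x^{k+1} = x^k P and x̂⁰ = x⁰, x̂^{k+1} = Γ_ε(x̂^k P), where Γ_ε(v)_i = v_i if v_i > ε and 0 otherwise. Then for every k ≥ 1, ∑_{i : x^k_i > ε} x^k_i ≥ ∑_{i=1}^N x̂^k_i; equivalently, ‖Γ_ε(x^k)‖₁ ≥ ‖x̂^k‖₁. -/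
/-- The thresholding map `Γ_ε`: it keeps every component of a vector that
exceeds `ε` and zeroes out all the others. -/
noncomputable def Gamma (ε : ℝ) {N : ℕ} (v : Fin N → ℝ) : Fin N → ℝ :=
  fun i => if ε < v i then v i else 0

/-- Let `x^{k+1} = x^k P` be the exact probability iteration and
`x̂⁰ = x⁰`, `x̂^{k+1} = Γ_ε(x̂^k P)` the thresholded iteration, where `P` has
nonnegative entries and `x⁰` nonnegative components. Then for every `k ≥ 1`,
`∑_{i : x^k_i > ε} x^k_i ≥ ∑_i x̂^k_i`, i.e. `‖Γ_ε(x^k)‖₁ ≥ ‖x̂^k‖₁`. -/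
theorem thresholded_mass_lower_bound (ε : ℝ) (hε : 0 ≤ ε) (N : ℕ)
    (P : Matrix (Fin N) (Fin N) ℝ) (hP : ∀ i j, 0 ≤ P i j)
    (x0 : Fin N → ℝ) (hx0 : ∀ i, 0 ≤ x0 i)
    (x xh : ℕ → Fin N → ℝ)
    (hx_init : x 0 = x0) (hx_step : ∀ k, x (k + 1) = Matrix.vecMul (x k) P)
    (hxh_init : xh 0 = x0)
    (hxh_step : ∀ k, xh (k + 1) = Gamma ε (Matrix.vecMul (xh k) P)) :
    ∀ k, 1 ≤ k →
      ∑ i ∈ Finset.univ.filter (fun i => ε < x k i), x k i ≥ ∑ i, xh k i := by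
  have key : ∀ k, ∀ i, 0 ≤ x k i ∧ xh k i ≤ x k i := by
    intro k
    induction k with
    | zero =>
      intro i
      rw [hx_init, hxh_init]
      exact ⟨hx0 i, le_rfl⟩
    | succ k ih =>
      intro i
      have h0 : 0 ≤ Matrix.vecMul (x k) P i := by
        simp only [Matrix.vecMul, dotProduct]
        exact Finset.sum_nonneg fun j _ => mul_nonneg (ih j).1 (hP j i)
      have h1 : Matrix.vecMul (xh k) P i ≤ Matrix.vecMul (x k) P i := by
        simp only [Matrix.vecMul, dotProduct]
        exact Finset.sum_le_sum fun j _ => mul_le_mul_of_nonneg_right (ih j).2 (hP j i)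
      rw [hx_step, hxh_step]
      refine ⟨h0, ?_⟩
      unfold Gamma
      split_ifs
      · exact h1
      · exact h0
  intro k hk
  obtain ⟨m, rfl⟩ : ∃ m, k = m + 1 := ⟨k - 1, by omega⟩
  rw [Finset.sum_filter]
  refine Finset.sum_le_sum fun i _ => ?_
  have h := key (m + 1) i
  split_ifs with hc
  · exact h.2
  · have h1 : Matrix.vecMul (xh m) P i ≤ Matrix.vecMul (x m) P i := by
      simp only [Matrix.vecMul, dotProduct]
      exact Finset.sum_le_sum fun j _ => mul_le_mul_of_nonneg_right (key m j).2 (hP j i)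
    rw [hx_step] at hc
    rw [hxh_step]
    unfold Gamma
    rw [if_neg (by linarith)]
end

section
/- Let ε ≥ 0, N ∈ ℕ, let P ∈ ℝ^{N×N} have all entries nonnegative, let x⁰ ∈ ℝ^N have all components nonnegative, and define x^{k+1} = x^k P and x̂⁰ = x⁰, x̂^{k+1} = Γ_ε(x̂^k P), where Γ_ε(v)_i = v_i if v_i > ε and 0 otherwise. Let k ≥ 1 and let D ⊆ {1,…,N} be any set of indices containing {i : x^k_i > ε}. Then ∑_{i ∈ D} x^k_i ≥ ∑_{i=1}^N x̂^k_i. -/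
/-- Let `x^{k+1} = x^k P` be the exact probability iteration and
`x̂⁰ = x⁰`, `x̂^{k+1} = Γ_ε(x̂^k P)` the thresholded iteration, where `P` has
nonnegative entries and `x⁰` nonnegative components. If `k ≥ 1` and `D` is
any set of indices containing every `i` with `x^k_i > ε`, then
`∑_{i ∈ D} x^k_i ≥ ∑_i x̂^k_i`. -/
theorem prob_in_uncertainty_set_lower_bound (ε : ℝ) (hε : 0 ≤ ε) (N : ℕ)
    (P : Matrix (Fin N) (Fin N) ℝ) (hP : ∀ i j, 0 ≤ P i j)
    (x0 : Fin N → ℝ) (hx0 : ∀ i, 0 ≤ x0 i)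
    (x xh : ℕ → Fin N → ℝ)
    (hx_init : x 0 = x0) (hx_step : ∀ k, x (k + 1) = Matrix.vecMul (x k) P)
    (hxh_init : xh 0 = x0)
    (hxh_step : ∀ k, xh (k + 1) = Gamma ε (Matrix.vecMul (xh k) P))
    (k : ℕ) (hk : 1 ≤ k) (D : Finset (Fin N))
    (hD : ∀ i, ε < x k i → i ∈ D) :
    ∑ i ∈ D, x k i ≥ ∑ i, xh k i := by
  have key : ∀ n i, 0 ≤ x n i ∧ xh n i ≤ x n i := by
    intro n
    induction n with
    | zero => intro i; rw [hx_init, hxh_init]; exact ⟨hx0 i, le_refl _⟩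
    | succ n ih =>
      intro i
      have h0 : 0 ≤ Matrix.vecMul (x n) P i := by
        simp only [Matrix.vecMul, dotProduct]
        exact Finset.sum_nonneg fun j _ => mul_nonneg (ih j).1 (hP j i)
      have h1 : Matrix.vecMul (xh n) P i ≤ Matrix.vecMul (x n) P i := by
        simp only [Matrix.vecMul, dotProduct]
        exact Finset.sum_le_sum fun j _ => mul_le_mul_of_nonneg_right (ih j).2 (hP j i)
      rw [hx_step, hxh_step]
      refine ⟨h0, ?_⟩
      unfold Gamma
      split_ifs
      · exact h1
      · exact h0
  have hz : ∀ i, i ∉ D → xh k i ≤ 0 := by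
    intro i hi
    obtain ⟨n, rfl⟩ : ∃ n, k = n + 1 := ⟨k - 1, by omega⟩
    have hle := (key (n + 1) i).2
    have hnot : ¬ ε < x (n + 1) i := fun h => hi (hD i h)
    rw [hxh_step] at hle ⊢
    unfold Gamma at hle ⊢
    split_ifs at hle ⊢ with h
    · exact absurd (lt_of_lt_of_le h hle) hnot
    · exact le_refl _
  have hs : ∑ i, xh k i = ∑ i ∈ D, xh k i + ∑ i ∈ Dᶜ, xh k i :=
    (Finset.sum_add_sum_compl D _).symm
  have h1 : ∑ i ∈ D, xh k i ≤ ∑ i ∈ D, x k i :=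
    Finset.sum_le_sum fun i _ => (key k i).2
  have h2 : ∑ i ∈ Dᶜ, xh k i ≤ 0 :=
    Finset.sum_nonpos fun i hi => hz i (Finset.mem_compl.mp hi)
  linarith
end
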